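/- Suppose F = E_ξ[F(·;ξ)] has nonempty optimal set X*, there is a subgradient selection at some x* ∈ X* with E_ξ[g_F(x*;ξ)] = 0 and E_ξ[‖g_F(x*;ξ)‖²] ≤ S*_F, and F satisfies the weak linear regularity property with constants σ_{F,μ} and β. Then for every x ∈ ℝ^n and every μ > 0, one proximal step satisfies E_ξ[ dist_{X*}²( z_μ(x;ξ) ) ] ≤ (1 − μ σ_{F,μ})·dist_{X*}²(x) + μ²·( E_ξ[‖g_F(x*;ξ)‖²] + 2β ). -/

import Mathlib

/- Statement 8: one-step decrease of SPP (proof of Theorem `th_recurence`).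
Under weak linear regularity with constants `σ_{F,μ}`, `β`, and a zero-mean subgradient
selection at an optimal point with second moment at most `S*_F`, one proximal step
satisfies for every `x` and `μ > 0`:
`E_ξ[dist²_{X*}(z_μ(x;ξ))] ≤ (1 − μσ_{F,μ})·dist²_{X*}(x) + μ²(E[‖g_F(x*;ξ)‖²] + 2β)`.
Proper convex lsc components are modelled by effective domain `D ξ` + real values;
`z_μ(x;ξ)` is the minimizer of `F(z;ξ) + ‖z−x‖²/(2μ)` and
`F_μ(x) = E_ξ[F(z_μ(x;ξ);ξ) + ‖z_μ(x;ξ)−x‖²/(2μ)]`. -/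

open MeasureTheory Metric Set
open scoped RealInnerProductSpace

noncomputable section

/-!
The objective `f y + ‖y - x‖² / (2μ)` of a proximal step is `μ⁻¹`-strongly convex, so it grows
quadratically away from its minimizer `z`; this is the three-point inequality
`‖z - y‖² ≤ ‖y - x‖² + 2μ (f y - (f z + ‖z - x‖² / (2μ)))`. Take expectations and the infimum over
the optimal points `y` to get `E[dist²(z)] ≤ dist²(x) + 2μ (F* - F_μ(x))`. Weak linear regularity
bounds `F_μ(x)` below in terms of `F_μ*`, and `F* - F_μ* ≤ μ/2 · E[‖g‖²]`: minorize each component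
by its subgradient at `x*`, complete the square, and use that the subgradients have mean zero.
-/

section QuadraticGrowth

open Filter Topology

theorem uniformConvexOn_modulus_le_sub_of_isMinOn {E : Type*} [NormedAddCommGroup E]
    [NormedSpace ℝ E] {s : Set E} {φ : ℝ → ℝ} {f : E → ℝ} (hf : UniformConvexOn s φ f) {z y : E}
    (hmin : IsMinOn f s z) (hz : z ∈ s) (hy : y ∈ s) : φ ‖z - y‖ ≤ f y - f z := by
  have hseg : ∀ t ∈ Ioo (0 : ℝ) 1, (1 - t) * φ ‖z - y‖ ≤ f y - f z := by
    rintro t ⟨ht₀, ht₁⟩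
    have hmem := hf.1 hz hy (sub_nonneg.2 ht₁.le) ht₀.le (sub_add_cancel 1 t)
    have hconv := hf.2 hz hy (sub_nonneg.2 ht₁.le) ht₀.le (sub_add_cancel 1 t)
    have hle := (isMinOn_iff.1 hmin _ hmem).trans hconv
    simp only [smul_eq_mul] at hle
    refine le_of_mul_le_mul_left ?_ ht₀
    linarith
  have hlim : Tendsto (fun t : ℝ ↦ (1 - t) * φ ‖z - y‖) (𝓝[>] 0) (𝓝 (φ ‖z - y‖)) :=
    Continuous.tendsto' (by fun_prop) _ _ (by simp) |>.mono_left nhdsWithin_le_nhds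
  exact le_of_tendsto hlim (eventually_of_mem (Ioo_mem_nhdsGT one_pos) hseg)

end QuadraticGrowth

theorem le_infDist_sq_add {α : Type*} [PseudoMetricSpace α] {S : Set α} (hS : S.Nonempty) {x : α}
    {a c : ℝ} (h : ∀ y ∈ S, a ≤ dist x y ^ 2 + c) : a ≤ infDist x S ^ 2 + c := by
  have hsqrt : √(a - c) ≤ infDist x S :=
    (le_infDist hS).2 fun y hy ↦ Real.sqrt_le_iff.2 ⟨dist_nonneg, sub_le_iff_le_add.2 (h y hy)⟩
  exact sub_le_iff_le_add.1 (Real.sqrt_le_iff.1 hsqrt).2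

section ProximalPoint

variable {E : Type*} [NormedAddCommGroup E] [InnerProductSpace ℝ E]
  {D : Set E} {f : E → ℝ} {μ : ℝ} {x z : E}

/-- The objective `y ↦ f y + ‖y - x‖² / (2μ)` minimized by a proximal step from `x`. Its minimum
over the effective domain of `f` is the Moreau envelope of `f` at `x`. -/
def proxObjective (f : E → ℝ) (μ : ℝ) (x y : E) : ℝ :=
  f y + ‖y - x‖ ^ 2 / (2 * μ)

/-- `z` is a proximal point of `f` at `x` with step size `μ`. The extended-valued function of the
paper is encoded by its effective domain `D` and its real values `f` on `D`. -/
def IsProxPoint (D : Set E) (f : E → ℝ) (μ : ℝ) (x z : E) : Prop :=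
  z ∈ D ∧ IsMinOn (proxObjective f μ x) D z

theorem strongConvexOn_proxObjective (hf : ConvexOn ℝ D f) (μ : ℝ) (x : E) :
    StrongConvexOn D μ⁻¹ (proxObjective f μ x) := by
  have haffine : ConvexOn ℝ D fun y ↦ -μ⁻¹ * ⟪x, y⟫ + ‖x‖ ^ 2 / (2 * μ) :=
    ((-μ⁻¹ • innerSL ℝ x).toLinearMap.convexOn hf.1).add_const _
  refine strongConvexOn_iff_convex.2 ((hf.add haffine).congr fun y _ ↦ ?_)
  simp only [Pi.add_apply, proxObjective, norm_sub_sq_real, real_inner_comm x y]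
  ring

theorem IsProxPoint.norm_sub_sq_le {y : E} (hz : IsProxPoint D f μ x z) (hf : ConvexOn ℝ D f)
    (hμ : 0 < μ) (hy : y ∈ D) :
    ‖z - y‖ ^ 2 ≤ ‖x - y‖ ^ 2 + 2 * μ * (f y - proxObjective f μ x z) := by
  have hgrowth : μ⁻¹ / 2 * ‖z - y‖ ^ 2 ≤ proxObjective f μ x y - proxObjective f μ x z :=
    uniformConvexOn_modulus_le_sub_of_isMinOn (strongConvexOn_proxObjective hf μ x) hz.2 hz.1 hy
  calc ‖z - y‖ ^ 2 = 2 * μ * (μ⁻¹ / 2 * ‖z - y‖ ^ 2) := by field_simp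
    _ ≤ 2 * μ * (proxObjective f μ x y - proxObjective f μ x z) := by gcongr
    _ = ‖x - y‖ ^ 2 + 2 * μ * (f y - proxObjective f μ x z) := by
      simp only [proxObjective, norm_sub_rev y x]
      field_simp
      ring

theorem neg_half_mul_norm_sq_le_inner_add (hμ : 0 < μ) (g v : E) :
    -(μ / 2 * ‖g‖ ^ 2) ≤ ⟪g, v⟫ + ‖v‖ ^ 2 / (2 * μ) := by
  have hsquare : ‖v + μ • g‖ ^ 2 / (2 * μ) = ‖v‖ ^ 2 / (2 * μ) + ⟪g, v⟫ + μ / 2 * ‖g‖ ^ 2 := by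
    rw [norm_add_sq_real, inner_smul_right, norm_smul, mul_pow, Real.norm_eq_abs, sq_abs,
      real_inner_comm]
    field_simp
  have hnonneg : 0 ≤ ‖v + μ • g‖ ^ 2 / (2 * μ) := by positivity
  linarith

theorem sub_le_proxObjective_of_subgradient {w g : E} (hμ : 0 < μ)
    (hg : f w + ⟪g, z - w⟫ ≤ f z) (x : E) :
    f w + ⟪x - w, g⟫ - μ / 2 * ‖g‖ ^ 2 ≤ proxObjective f μ x z := by
  have hsplit : ⟪g, z - w⟫ = ⟪x - w, g⟫ + ⟪g, z - x⟫ := by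
    rw [← sub_add_sub_cancel' x w z, inner_add_right, real_inner_comm]
  have hyoung := neg_half_mul_norm_sq_le_inner_add hμ g (z - x)
  rw [proxObjective]
  linarith

end ProximalPoint

section StochasticProximalPoint

variable {E : Type*} [NormedAddCommGroup E] [InnerProductSpace ℝ E]
  {Ω : Type*} [MeasurableSpace Ω] {P : Measure Ω}
  {D : Ω → Set E} {F : Ω → E → ℝ} {μ : ℝ} {x xstar : E} {g : Ω → E}

theorem integral_sub_le_integral_proxObjective [CompleteSpace E] {z : Ω → E} (hμ : 0 < μ)
    (hFint : Integrable (fun ξ ↦ F ξ xstar) P)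
    (hg : ∀ᵐ ξ ∂P, F ξ xstar + ⟪g ξ, z ξ - xstar⟫ ≤ F ξ (z ξ))
    (hgint : Integrable g P) (hgmean : ∫ ξ, g ξ ∂P = 0)
    (hg2int : Integrable (fun ξ ↦ ‖g ξ‖ ^ 2) P)
    (hobj : Integrable (fun ξ ↦ proxObjective (F ξ) μ x (z ξ)) P) :
    (∫ ξ, F ξ xstar ∂P) - μ / 2 * ∫ ξ, ‖g ξ‖ ^ 2 ∂P
      ≤ ∫ ξ, proxObjective (F ξ) μ x (z ξ) ∂P := by
  have hinner : Integrable (fun ξ ↦ ⟪x - xstar, g ξ⟫) P := hgint.const_inner _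
  have hlin : Integrable (fun ξ ↦ F ξ xstar + ⟪x - xstar, g ξ⟫) P := hFint.add hinner
  have hsq : Integrable (fun ξ ↦ μ / 2 * ‖g ξ‖ ^ 2) P := hg2int.const_mul _
  calc (∫ ξ, F ξ xstar ∂P) - μ / 2 * ∫ ξ, ‖g ξ‖ ^ 2 ∂P
      = ∫ ξ, (F ξ xstar + ⟪x - xstar, g ξ⟫ - μ / 2 * ‖g ξ‖ ^ 2) ∂P := by
        rw [integral_sub hlin hsq, integral_add hFint hinner, integral_inner hgint, hgmean,
          inner_zero_right, add_zero, integral_const_mul]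
    _ ≤ ∫ ξ, proxObjective (F ξ) μ x (z ξ) ∂P :=
        integral_mono_ae (hlin.sub hsq) hobj <|
          hg.mono fun ξ hξ ↦ sub_le_proxObjective_of_subgradient hμ hξ x

variable [IsProbabilityMeasure P]

theorem integral_infDist_sq_le_dist_sq_add {z : Ω → E} {S : Set E} {y : E} (hμ : 0 < μ)
    (hFconv : ∀ᵐ ξ ∂P, ConvexOn ℝ (D ξ) (F ξ))
    (hz : ∀ᵐ ξ ∂P, IsProxPoint (D ξ) (F ξ) μ x (z ξ))
    (hyS : y ∈ S) (hyD : ∀ᵐ ξ ∂P, y ∈ D ξ) (hFint : Integrable (fun ξ ↦ F ξ y) P)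
    (hobj : Integrable (fun ξ ↦ proxObjective (F ξ) μ x (z ξ)) P)
    (hdist : Integrable (fun ξ ↦ infDist (z ξ) S ^ 2) P) :
    ∫ ξ, infDist (z ξ) S ^ 2 ∂P
      ≤ dist x y ^ 2
        + 2 * μ * ((∫ ξ, F ξ y ∂P) - ∫ ξ, proxObjective (F ξ) μ x (z ξ) ∂P) := by
  have hgap : Integrable (fun ξ ↦ 2 * μ * (F ξ y - proxObjective (F ξ) μ x (z ξ))) P :=
    (hFint.sub hobj).const_mul _
  calc ∫ ξ, infDist (z ξ) S ^ 2 ∂P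
      ≤ ∫ ξ, (dist x y ^ 2 + 2 * μ * (F ξ y - proxObjective (F ξ) μ x (z ξ))) ∂P := by
        refine integral_mono_ae hdist ((integrable_const _).add hgap) ?_
        filter_upwards [hFconv, hz, hyD] with ξ hconv hzξ hyξ
        calc infDist (z ξ) S ^ 2 ≤ dist (z ξ) y ^ 2 :=
              pow_le_pow_left₀ infDist_nonneg (infDist_le_dist_of_mem hyS) 2
          _ ≤ dist x y ^ 2 + 2 * μ * (F ξ y - proxObjective (F ξ) μ x (z ξ)) := by
              simpa only [dist_eq_norm] using hzξ.norm_sub_sq_le hconv hμ hyξ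
    _ = dist x y ^ 2
        + 2 * μ * ((∫ ξ, F ξ y ∂P) - ∫ ξ, proxObjective (F ξ) μ x (z ξ) ∂P) := by
        rw [integral_add (integrable_const _) hgap, integral_const_mul, integral_sub hFint hobj,
          integral_const, probReal_univ, one_smul]

/-- Averaging the subgradient inequality at `xstar` makes `xstar`, hence every point of `S`, a
minimizer of `E[F(·;ξ)]`; regularity is measured by the distance to `S`, which need not contain all
minimizers. -/
theorem spp_one_step_recurrence_general [CompleteSpace E] {S : Set E} {prox : E → Ω → E}
    {σ β Fmustar : ℝ} (hμ : 0 < μ)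
    (hFconv : ∀ᵐ ξ ∂P, ConvexOn ℝ (D ξ) (F ξ))
    (hS : ∀ y ∈ S, (∀ᵐ ξ ∂P, y ∈ D ξ) ∧ Integrable (fun ξ ↦ F ξ y) P ∧
      ∫ ξ, F ξ y ∂P = ∫ ξ, F ξ xstar ∂P)
    (hxstar : xstar ∈ S)
    (hg : ∀ᵐ ξ ∂P, ∀ y ∈ D ξ, F ξ xstar + ⟪g ξ, y - xstar⟫ ≤ F ξ y)
    (hgint : Integrable g P) (hgmean : ∫ ξ, g ξ ∂P = 0)
    (hg2int : Integrable (fun ξ ↦ ‖g ξ‖ ^ 2) P)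
    (hprox : ∀ u, ∀ᵐ ξ ∂P, IsProxPoint (D ξ) (F ξ) μ u (prox u ξ))
    (hobj : ∀ u, Integrable (fun ξ ↦ proxObjective (F ξ) μ u (prox u ξ)) P)
    (hFmustar : IsGLB (range fun u ↦ ∫ ξ, proxObjective (F ξ) μ u (prox u ξ) ∂P) Fmustar)
    (hWLR : σ / 2 * infDist x S ^ 2
      ≤ (∫ ξ, proxObjective (F ξ) μ x (prox x ξ) ∂P) - Fmustar + μ * β)
    (hdist : Integrable (fun ξ ↦ infDist (prox x ξ) S ^ 2) P) :
    ∫ ξ, infDist (prox x ξ) S ^ 2 ∂P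
      ≤ (1 - μ * σ) * infDist x S ^ 2 + μ ^ 2 * ((∫ ξ, ‖g ξ‖ ^ 2 ∂P) + 2 * β) := by
  set Fstar := ∫ ξ, F ξ xstar ∂P
  set Fmu := ∫ ξ, proxObjective (F ξ) μ x (prox x ξ) ∂P
  set V := ∫ ξ, ‖g ξ‖ ^ 2 ∂P
  have hsmoothing : Fstar - μ / 2 * V ≤ Fmustar := hFmustar.2 <| forall_mem_range.2 fun u ↦
    integral_sub_le_integral_proxObjective hμ (hS xstar hxstar).2.1
      (by filter_upwards [hg, hprox u] with ξ hgξ hzξ using hgξ _ hzξ.1)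
      hgint hgmean hg2int (hobj u)
  have hdescent : ∫ ξ, infDist (prox x ξ) S ^ 2 ∂P
      ≤ infDist x S ^ 2 + 2 * μ * (Fstar - Fmu) := by
    refine le_infDist_sq_add ⟨xstar, hxstar⟩ fun y hy ↦ ?_
    obtain ⟨hyD, hyint, hyval⟩ := hS y hy
    simpa only [hyval] using integral_infDist_sq_le_dist_sq_add hμ hFconv (hprox x) hy hyD hyint
      (hobj x) hdist
  have hgap : Fstar - Fmu ≤ μ / 2 * V + μ * β - σ / 2 * infDist x S ^ 2 := by linarith
  calc ∫ ξ, infDist (prox x ξ) S ^ 2 ∂P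
      ≤ infDist x S ^ 2 + 2 * μ * (Fstar - Fmu) := hdescent
    _ ≤ infDist x S ^ 2 + 2 * μ * (μ / 2 * V + μ * β - σ / 2 * infDist x S ^ 2) := by gcongr
    _ = (1 - μ * σ) * infDist x S ^ 2 + μ ^ 2 * (V + 2 * β) := by ring

end StochasticProximalPoint

theorem spp_one_step_recurrence
    {n : ℕ} {Ω : Type} [MeasurableSpace Ω] (P : Measure Ω) [IsProbabilityMeasure P]
    -- the components F(·;ξ): proper convex lsc
    (D : Ω → Set (EuclideanSpace ℝ (Fin n)))
    (F : Ω → EuclideanSpace ℝ (Fin n) → ℝ)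
    (hDne : ∀ ξ, (D ξ).Nonempty)
    (hDconv : ∀ ξ, Convex ℝ (D ξ))
    (hFconv : ∀ ξ, ConvexOn ℝ (D ξ) (F ξ))
    (hFlsc : ∀ ξ, IsClosed {p : EuclideanSpace ℝ (Fin n) × ℝ | p.1 ∈ D ξ ∧ F ξ p.1 ≤ p.2})
    -- optimal set X* and optimal value F* of F = E[F(·;ξ)]
    (Xstar : Set (EuclideanSpace ℝ (Fin n))) (Fstar : ℝ)
    (hXstar : ∀ x, x ∈ Xstar ↔
      ((∀ ξ, x ∈ D ξ) ∧ Integrable (fun ξ => F ξ x) P ∧ ∫ ξ, F ξ x ∂P = Fstar))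
    (hFmin : ∀ x, (∀ ξ, x ∈ D ξ) → Integrable (fun ξ => F ξ x) P → Fstar ≤ ∫ ξ, F ξ x ∂P)
    -- zero-mean subgradient selection at an optimal point x*, second moment ≤ S*_F
    (xstar : EuclideanSpace ℝ (Fin n)) (hxstar : xstar ∈ Xstar)
    (g : Ω → EuclideanSpace ℝ (Fin n)) (SF : ℝ)
    (hg : ∀ ξ, ∀ y ∈ D ξ, F ξ xstar + ⟪g ξ, y - xstar⟫ ≤ F ξ y)
    (hgint : Integrable g P)
    (hgmean : (∫ ξ, g ξ ∂P) = 0)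
    (hg2int : Integrable (fun ξ => ‖g ξ‖ ^ 2) P)
    (hSF : (∫ ξ, ‖g ξ‖ ^ 2 ∂P) ≤ SF)
    -- proximal map z_μ(x;ξ) and integrability of the envelope
    (prox : ℝ → EuclideanSpace ℝ (Fin n) → Ω → EuclideanSpace ℝ (Fin n))
    (hprox : ∀ μ, 0 < μ → ∀ x ξ, prox μ x ξ ∈ D ξ ∧ ∀ y ∈ D ξ,
      F ξ (prox μ x ξ) + ‖prox μ x ξ - x‖ ^ 2 / (2 * μ)
        ≤ F ξ y + ‖y - x‖ ^ 2 / (2 * μ))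
    (hFmuint : ∀ μ, 0 < μ → ∀ x, Integrable
      (fun ξ => F ξ (prox μ x ξ) + ‖prox μ x ξ - x‖ ^ 2 / (2 * μ)) P)
    -- optimal value F_μ* of the smoothed problem
    (Fmustar : ℝ → ℝ)
    (hFmustar : ∀ μ, 0 < μ → IsGLB
      (Set.range fun x => ∫ ξ, (F ξ (prox μ x ξ) + ‖prox μ x ξ - x‖ ^ 2 / (2 * μ)) ∂P)
      (Fmustar μ))
    -- weak linear regularity with constants σ_{F,μ} (nonincreasing in μ) and β ≥ 0
    (σ : ℝ → ℝ) (β : ℝ)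
    (hσpos : ∀ μ, 0 < μ → 0 < σ μ)
    (hσmono : AntitoneOn σ (Set.Ioi (0 : ℝ)))
    (hβ : 0 ≤ β)
    (hWLR : ∀ μ, 0 < μ → ∀ x, σ μ / 2 * (infDist x Xstar) ^ 2
      ≤ (∫ ξ, (F ξ (prox μ x ξ) + ‖prox μ x ξ - x‖ ^ 2 / (2 * μ)) ∂P) - Fmustar μ + μ * β)
    -- integrability of the one-step squared distance
    (hdint : ∀ μ, 0 < μ → ∀ x,
      Integrable (fun ξ => (infDist (prox μ x ξ) Xstar) ^ 2) P) :
    ∀ x, ∀ μ, 0 < μ →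
      (∫ ξ, (infDist (prox μ x ξ) Xstar) ^ 2 ∂P)
        ≤ (1 - μ * σ μ) * (infDist x Xstar) ^ 2
          + μ ^ 2 * ((∫ ξ, ‖g ξ‖ ^ 2 ∂P) + 2 * β) := fun x μ hμ ↦
  spp_one_step_recurrence_general hμ (.of_forall hFconv)
    (fun y hy ↦ have ⟨hyD, hyint, hyval⟩ := (hXstar y).1 hy
      ⟨.of_forall hyD, hyint, hyval.trans ((hXstar xstar).1 hxstar).2.2.symm⟩)
    hxstar (.of_forall hg) hgint hgmean hg2int (fun u ↦ .of_forall (hprox μ hμ u)) (hFmuint μ hμ)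
    (hFmustar μ hμ) (hWLR μ hμ x) (hdint μ hμ x)
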